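/- With E[X_n²] = [x^n] (∂/∂t (t ∂Z/∂t))|_{t=1} where Z(x,t) = 1 + xB_p(x)/(1 - t(A_p(x)-B_p(x))), one has the formal power series identity Σ_{n≥0} E[X_n²] x^n = 2x/((1-x)^3 B_p(x)^2) - 3x/((1-x)^2 B_p(x)) + x/(1-x). -/

import Mathlib

open Finset Filter

noncomputable section

/-- The weight of a path, given as a list of vertices. -/
def pathWeight (wt : ℕ → ℕ → ℕ) (l : List ℕ) : ℕ :=
  ((l.zip l.tail).map fun e => wt e.1 e.2).sum

/-- `l` is a directed path from `a` to `b` in the transitive tournament on `ℕ`. -/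
def IsPath (a b : ℕ) (l : List ℕ) : Prop :=
  l.Chain' (· < ·) ∧ l.head? = some a ∧ l.getLast? = some b

/-- `maxW wt a b` is the maximum weight of a directed path from `a` to `b`. -/
def maxW (wt : ℕ → ℕ → ℕ) (a b : ℕ) : ℕ :=
  sSup {m | ∃ l, IsPath a b l ∧ pathWeight wt l = m}

/-- The edges of the transitive tournament on `n` vertices. -/
abbrev Edge (n : ℕ) := {e : Fin n × Fin n // (e.1 : ℕ) < (e.2 : ℕ)}

/-- The sample space: an assignment of a `0/1` weight (a `Bool`) to each edge. -/
abbrev Omega (n : ℕ) := Edge n → Bool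

/-- The weight function on vertices `1, …, n` induced by an outcome `w`. -/
def wtOf {n : ℕ} (w : Omega n) (a b : ℕ) : ℕ :=
  if h : 1 ≤ a ∧ a < b ∧ b ≤ n then
    (if w ⟨(⟨a - 1, by omega⟩, ⟨b - 1, by omega⟩), by show a - 1 < b - 1; omega⟩
      then 1 else 0)
  else 0

/-- The probability of outcome `w`: each edge independently has weight 1
with probability `p` and weight 0 with probability `1 - p`. -/
def prob (p : ℝ) {n : ℕ} (w : Omega n) : ℝ :=
  ∏ e : Edge n, (if w e then p else 1 - p)

/-- `X n w` : the maximum weight of a directed path from vertex `1` to vertex `n`. -/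
def X (n : ℕ) (w : Omega n) : ℕ := maxW (wtOf w) 1 n

/-- The expectation of `X n` under i.i.d. Bernoulli(p) edge weights. -/
def EX (p : ℝ) (n : ℕ) : ℝ := ∑ w : Omega n, prob p w * (X n w : ℝ)


/-- `A_p(x) = Σ_{n≥0} (1-p)^{C(n,2)} x^n` as a formal power series over `ℝ`. -/
noncomputable def Aps (p : ℝ) : PowerSeries ℝ :=
  PowerSeries.mk fun n => (1 - p) ^ (n.choose 2)

/-- `B_p(x) = Σ_{n≥0} (1-p)^{C(n+1,2)} x^n` as a formal power series over `ℝ`. -/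
noncomputable def Bps (p : ℝ) : PowerSeries ℝ :=
  PowerSeries.mk fun n => (1 - p) ^ ((n + 1).choose 2)

/-- The second moment `E[X_n²]`. -/
def EX2 (p : ℝ) (n : ℕ) : ℝ := ∑ w : Omega n, prob p w * (X n w : ℝ) ^ 2

open Classical in
def st (wt : ℕ → ℕ → ℕ) : ℕ → ℕ × ℕ
  | 0 => (0, 0)
  | n + 1 =>
    if ∃ u, n < u + (st wt n).2 ∧ u ≤ n ∧ wt u (n + 1) ≠ 0 then ((st wt n).1 + 1, 1)
    else ((st wt n).1, (st wt n).2 + 1)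

theorem st_one (wt : ℕ → ℕ → ℕ) : (st wt 1).1 = 0 := by
  have : ¬ ∃ u, 0 < u + (st wt 0).2 ∧ u ≤ 0 ∧ wt u (0 + 1) ≠ 0 := by
    rintro ⟨u, h1, h2, _⟩
    simp [st] at h1
    omega
  rw [st, if_neg this]
  rfl

theorem st_congr (wt wt' : ℕ → ℕ → ℕ) (n : ℕ) (h : ∀ a b, b ≤ n → wt a b = wt' a b) :
    st wt n = st wt' n := by
  induction n with
  | zero => rfl
  | succ n ih =>
    have ih' := ih (fun a b hb => h a b (by omega))
    have hi : (∃ u, n < u + (st wt n).2 ∧ u ≤ n ∧ wt u (n + 1) ≠ 0) ↔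
        ∃ u, n < u + (st wt' n).2 ∧ u ≤ n ∧ wt' u (n + 1) ≠ 0 := by
      simp only [ih', h _ (n + 1) le_rfl]
    rw [st, st]
    by_cases hc : ∃ u, n < u + (st wt n).2 ∧ u ≤ n ∧ wt u (n + 1) ≠ 0
    · rw [if_pos hc, if_pos (hi.1 hc), ih']
    · rw [if_neg hc, if_neg (fun h' => hc (hi.2 h')), ih']

theorem st_le (wt : ℕ → ℕ → ℕ) (n : ℕ) : (st wt n).2 ≤ n := by
  induction n with
  | zero => simp [st]
  | succ n ih =>
    simp only [st]
    split_ifs <;> simp <;> omega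

theorem st_pos (wt : ℕ → ℕ → ℕ) (n : ℕ) : 1 ≤ (st wt (n + 1)).2 := by
  simp only [st]
  split_ifs <;> simp

theorem st_inv (wt : ℕ → ℕ → ℕ) (n : ℕ) : ∀ v, v ≤ n → 1 ≤ v →
    (n < v + (st wt n).2 → (st wt v).1 = (st wt n).1) ∧
    (¬ n < v + (st wt n).2 → (st wt v).1 + 1 ≤ (st wt n).1) := by
  induction n with
  | zero => intro v h1 h2; omega
  | succ n ih =>
    intro v hv h1
    rcases Nat.lt_or_ge n v with h | h
    · obtain rfl : v = n + 1 := by omega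
      have := st_pos wt n
      exact ⟨fun _ => rfl, fun h => by omega⟩
    · have := ih v h h1
      generalize hL : (st wt v).1 = L at this ⊢
      simp only [st]
      split_ifs <;> simp <;> constructor <;> intro h3 <;>
        by_cases h4 : n < v + (st wt n).2 <;> simp [h4] at this <;> omega

theorem st_step (wt : ℕ → ℕ → ℕ) (h01 : ∀ a b, wt a b ≤ 1) (u v : ℕ) (h1 : 1 ≤ u) (huv : u < v) :
    (st wt u).1 + wt u v ≤ (st wt v).1 := by
  obtain ⟨n, rfl⟩ : ∃ n, v = n + 1 := ⟨v - 1, by omega⟩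
  have h := st_inv wt n u (by omega) h1
  have h2 := h01 u (n + 1)
  generalize hL : (st wt u).1 = L at h ⊢
  simp only [st]
  by_cases h4 : n < u + (st wt n).2
  · simp only [h4, true_implies, not_true, false_implies, and_true] at h
    split_ifs with h5
    · simp; omega
    · have : wt u (n + 1) = 0 := by
        by_contra h6
        exact h5 ⟨u, h4, by omega, h6⟩
      simp; omega
  · simp only [h4, false_implies, not_false_eq_true, true_implies, true_and] at h
    split_ifs <;> simp <;> omega

theorem path_le (wt : ℕ → ℕ → ℕ) (h01 : ∀ a b, wt a b ≤ 1) (b : ℕ) (l : List ℕ) :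
    ∀ a, 1 ≤ a → IsPath a b l → (st wt a).1 + pathWeight wt l ≤ (st wt b).1 := by
  induction l with
  | nil => intro a _ h; simp [IsPath] at h
  | cons c l ih =>
    intro a ha h
    obtain ⟨hc, hh, hl⟩ := h
    simp at hh
    subst hh
    cases l with
    | nil => simp at hl; subst hl; simp [pathWeight]
    | cons d l =>
      have hcd : c < d := by
        have := hc
        simp [List.Chain'] at this
        exact this.1
      have h1 := ih d (by omega) ⟨by
        have := hc
        simp [List.Chain'] at this ⊢
        exact this.2, by simp, by simpa [List.getLast?_cons_cons] using hl⟩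
      have h2 := st_step wt h01 c d ha hcd
      have h3 : pathWeight wt (c :: d :: l) = wt c d + pathWeight wt (d :: l) := by
        simp [pathWeight]
      omega

theorem path_append (wt : ℕ → ℕ → ℕ) (b c : ℕ) (hbc : b < c) (l : List ℕ) :
    ∀ a, IsPath a b l →
    IsPath a c (l ++ [c]) ∧ pathWeight wt (l ++ [c]) = pathWeight wt l + wt b c := by
  induction l with
  | nil => intro a h; simp [IsPath] at h
  | cons d l ih =>
    intro a h
    obtain ⟨hc, hh, hl⟩ := h
    simp at hh
    subst hh
    cases l with
    | nil => simp at hl; subst hl; simp [pathWeight, IsPath, List.Chain', hbc]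
    | cons e l =>
      have hc' := hc
      simp only [List.Chain', List.isChain_cons_cons] at hc'
      obtain ⟨⟨p1, p2, p3⟩, p4⟩ := ih e ⟨hc'.2, by simp, by simpa [List.getLast?_cons_cons] using hl⟩
      refine ⟨⟨?_, by simp, ?_⟩, ?_⟩
      · simp only [List.Chain', List.cons_append, List.isChain_cons_cons] at p1 ⊢
        exact ⟨hc'.1, p1⟩
      · simp only [List.cons_append, List.getLast?_cons_cons] at p3 ⊢
        exact p3
      · have h3 : ∀ l, pathWeight wt (d :: e :: l) = wt d e + pathWeight wt (e :: l) := by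
          intro l; simp [pathWeight]
        simp only [List.cons_append] at p4 ⊢
        rw [h3, h3, p4]; omega

theorem path_exists (wt : ℕ → ℕ → ℕ) (h01 : ∀ a b, wt a b ≤ 1) (n : ℕ) : 1 ≤ n →
    ∃ l, IsPath 1 n l ∧ pathWeight wt l = (st wt n).1 := by
  induction n using Nat.strong_induction_on with
  | _ n ih =>
    intro hn
    obtain ⟨n, rfl⟩ : ∃ m, n = m + 1 := ⟨n - 1, by omega⟩
    rcases Nat.eq_zero_or_pos n with rfl | hn0
    · refine ⟨[1], by simp [IsPath, List.Chain'], ?_⟩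
      rw [st_one]
      simp [pathWeight]
    · by_cases hex : ∃ u, n < u + (st wt n).2 ∧ u ≤ n ∧ wt u (n + 1) ≠ 0
      · obtain ⟨u, h1, h2, h3⟩ := id hex
        have := st_le wt n
        obtain ⟨l, hl, hw⟩ := ih u (by omega) (by omega)
        have hi := (st_inv wt n u h2 (by omega)).1 h1
        have ha := path_append wt u (n + 1) (by omega) l 1 hl
        refine ⟨_, ha.1, ?_⟩
        rw [ha.2, hw, hi]
        have := h01 u (n + 1)
        simp only [st, if_pos hex]
        omega
      · obtain ⟨l, hl, hw⟩ := ih n (by omega) hn0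
        have ha := path_append wt n (n + 1) (by omega) l 1 hl
        refine ⟨_, ha.1, ?_⟩
        rw [ha.2, hw]
        simp only [st, if_neg hex]
        have : wt n (n + 1) = 0 := by
          by_contra h6
          obtain ⟨k, rfl⟩ : ∃ k, n = k + 1 := ⟨n - 1, by omega⟩
          exact hex ⟨_, by have := st_pos wt k; omega, le_rfl, h6⟩
        omega

theorem path_mono (b : ℕ) (l : List ℕ) : ∀ a, IsPath a b l → a ≤ b := by
  induction l with
  | nil => intro a h; simp [IsPath] at h
  | cons c l ih =>
    intro a h
    obtain ⟨hc, hh, hl⟩ := h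
    simp at hh
    subst hh
    cases l with
    | nil => simp at hl; omega
    | cons d l =>
      simp only [List.Chain', List.isChain_cons_cons] at hc
      have := ih d ⟨hc.2, by simp, by simpa [List.getLast?_cons_cons] using hl⟩
      have := hc.1
      omega

theorem maxW_eq (wt : ℕ → ℕ → ℕ) (h01 : ∀ a b, wt a b ≤ 1) (n : ℕ) :
    maxW wt 1 n = (st wt n).1 := by
  unfold maxW
  rcases Nat.eq_zero_or_pos n with rfl | hn
  · have : {m | ∃ l, IsPath 1 0 l ∧ pathWeight wt l = m} = ∅ := by
      ext m
      simp only [Set.mem_setOf_eq, Set.mem_empty_iff_false, iff_false]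
      rintro ⟨l, hl, _⟩
      have := path_mono _ _ _ hl
      omega
    rw [this]; simp [st]
  · have hs1 : (st wt 1).1 = 0 := st_one wt
    apply IsGreatest.csSup_eq
    refine ⟨path_exists wt h01 n hn, ?_⟩
    rintro m ⟨l, hl, rfl⟩
    have := path_le wt h01 n l 1 le_rfl hl
    omega

theorem wtOf_le {n : ℕ} (w : Omega n) (a b : ℕ) : wtOf w a b ≤ 1 := by
  unfold wtOf
  split_ifs <;> simp

/-- expectation of a function of the state -/
def TT (p : ℝ) (n : ℕ) (h : ℕ × ℕ → ℝ) : ℝ := ∑ w : Omega n, prob p w * h (st (wtOf w) n)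

theorem EX2_eq (p : ℝ) (n : ℕ) : EX2 p n = TT p n (fun s => (s.1 : ℝ) ^ 2) := by
  unfold EX2 TT X
  simp only [maxW_eq _ (wtOf_le _)]

/-- splitting off the edges into the last vertex -/
def edgeEquiv (n : ℕ) : Edge n ⊕ Fin n ≃ Edge (n + 1) where
  toFun := Sum.elim (fun e => ⟨(e.1.1.castSucc, e.1.2.castSucc), e.2⟩)
    (fun i => ⟨(i.castSucc, Fin.last n), i.2⟩)
  invFun e := if h : (e.1.2 : ℕ) < n then
      Sum.inl ⟨(⟨e.1.1, lt_trans e.2 h⟩, ⟨e.1.2, h⟩), e.2⟩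
    else Sum.inr ⟨e.1.1, by have := e.2; have := e.1.2.2; omega⟩
  left_inv := by
    rintro (⟨⟨a, b⟩, h⟩ | i)
    · simp
    · simp
  right_inv := by
    rintro ⟨⟨a, b⟩, h⟩
    by_cases hb : (b : ℕ) < n
    · simp [hb]
    · have : b = Fin.last n := by
        apply Fin.ext; have := b.2; simp; omega
      subst this
      simp

def omEquiv (n : ℕ) : Omega (n + 1) ≃ Omega n × (Fin n → Bool) :=
  ((edgeEquiv n).arrowCongr (Equiv.refl Bool)).symm.trans (Equiv.sumArrowEquivProdArrow _ _ _)

theorem prob_split (p : ℝ) (n : ℕ) (w : Omega (n + 1)) :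
    prob p w = prob p (omEquiv n w).1 * ∏ i, (if (omEquiv n w).2 i then p else 1 - p) := by
  unfold prob
  rw [← (edgeEquiv n).prod_comp, Fintype.prod_sum_type]
  rfl

theorem wtOf_old (n : ℕ) (w : Omega (n + 1)) (a b : ℕ) (hb : b ≤ n) :
    wtOf w a b = wtOf (omEquiv n w).1 a b := by
  unfold wtOf
  by_cases h : 1 ≤ a ∧ a < b ∧ b ≤ n
  · have h' : 1 ≤ a ∧ a < b ∧ b ≤ n + 1 := ⟨h.1, h.2.1, by omega⟩
    rw [dif_pos h, dif_pos h']
    rfl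
  · have h' : ¬ (1 ≤ a ∧ a < b ∧ b ≤ n + 1) := fun h' => h ⟨h'.1, h'.2.1, hb⟩
    rw [dif_neg h, dif_neg h']

theorem wtOf_new (n : ℕ) (w : Omega (n + 1)) (i : Fin n) :
    wtOf w (i + 1) (n + 1) = if (omEquiv n w).2 i then 1 else 0 := by
  unfold wtOf
  have h' : 1 ≤ (i : ℕ) + 1 ∧ (i : ℕ) + 1 < n + 1 ∧ n + 1 ≤ n + 1 := ⟨by omega, by omega, le_rfl⟩
  rw [dif_pos h']
  rfl

open Classical in
theorem inner_sum_v (p : ℝ) (n m : ℕ) (hm : m ≤ n) (a b : ℝ) :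
    ∑ v : Fin n → Bool, (∏ i, (if v i then p else 1 - p)) *
      (if ∃ i : Fin n, n < (i : ℕ) + 1 + m ∧ v i = true then a else b) =
    (1 - p) ^ m * b + (1 - (1 - p) ^ m) * a := by
  have e1 : ∑ v : Fin n → Bool, (∏ i, (if v i then p else 1 - p)) = 1 := by
    have := (Fintype.prod_sum (fun (i : Fin n) (c : Bool) => if c then p else 1 - p)).symm
    rw [this]; simp
  have e2 : ∑ v : Fin n → Bool, (∏ i, (if v i then p else 1 - p)) *
      (if ∃ i : Fin n, n < (i : ℕ) + 1 + m ∧ v i = true then (0 : ℝ) else 1) = (1 - p) ^ m := by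
    have := (Fintype.prod_sum (fun (i : Fin n) (c : Bool) =>
      if n < (i : ℕ) + 1 + m ∧ c = true then 0 else if c then p else 1 - p))
    have h2 : ∀ v : Fin n → Bool, (∏ i, (if v i then p else 1 - p)) *
      (if ∃ i : Fin n, n < (i : ℕ) + 1 + m ∧ v i = true then (0 : ℝ) else 1) =
      ∏ i : Fin n, (if n < (i : ℕ) + 1 + m ∧ v i = true then 0 else if v i then p else 1 - p) := by
      intro v
      split_ifs with h
      · obtain ⟨i, hi⟩ := h
        rw [mul_zero]
        symm
        apply Finset.prod_eq_zero (Finset.mem_univ i)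
        rw [if_pos hi]
      · rw [mul_one]
        apply Finset.prod_congr rfl
        intro i _
        rw [if_neg (fun hi => h ⟨i, hi⟩)]
    rw [Finset.sum_congr rfl (fun v _ => h2 v), ← this]
    have h3 : ∀ i : Fin n, (∑ c : Bool,
        if n < (i : ℕ) + 1 + m ∧ c = true then 0 else if c then p else 1 - p) =
        if n < (i : ℕ) + 1 + m then 1 - p else 1 := by
      intro i
      by_cases hi : n < (i : ℕ) + 1 + m <;> simp [hi]
    rw [Finset.prod_congr rfl (fun i _ => h3 i), Fin.prod_univ_eq_prod_range
      (fun i => if n < i + 1 + m then 1 - p else 1) n]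
    obtain ⟨k, rfl⟩ : ∃ k, n = k + m := ⟨n - m, by omega⟩
    rw [Finset.prod_range_add, Finset.prod_eq_one, one_mul]
    · rw [Finset.prod_congr rfl (g := fun _ => 1 - p)]
      · simp
      · intro i hi
        rw [if_pos (by omega)]
    · intro i hi
      rw [Finset.mem_range] at hi
      rw [if_neg (by omega)]
  have h4 : ∀ v : Fin n → Bool, (∏ i, (if v i then p else 1 - p)) *
      (if ∃ i : Fin n, n < (i : ℕ) + 1 + m ∧ v i = true then a else b) =
      a * (∏ i, (if v i then p else 1 - p)) + (b - a) * ((∏ i, (if v i then p else 1 - p)) *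
      (if ∃ i : Fin n, n < (i : ℕ) + 1 + m ∧ v i = true then (0 : ℝ) else 1)) := by
    intro v
    split_ifs <;> ring
  rw [Finset.sum_congr rfl (fun v _ => h4 v), Finset.sum_add_distrib, ← Finset.mul_sum,
    ← Finset.mul_sum, e1, e2]
  ring

theorem TT_succ (p : ℝ) (n : ℕ) (h : ℕ × ℕ → ℝ) :
    TT p (n + 1) h = TT p n (fun s => (1 - p) ^ s.2 * h (s.1, s.2 + 1) +
      (1 - (1 - p) ^ s.2) * h (s.1 + 1, 1)) := by
  classical
  unfold TT
  have key : ∀ w : Omega (n + 1), prob p w * h (st (wtOf w) (n + 1)) =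
      (fun x : Omega n × (Fin n → Bool) => prob p x.1 *
        ((∏ i, (if x.2 i then p else 1 - p)) *
        (if ∃ i : Fin n, n < (i : ℕ) + 1 + (st (wtOf x.1) n).2 ∧ x.2 i = true
          then h ((st (wtOf x.1) n).1 + 1, 1)
          else h ((st (wtOf x.1) n).1, (st (wtOf x.1) n).2 + 1)))) (omEquiv n w) := by
    intro w
    have hst : st (wtOf w) n = st (wtOf (omEquiv n w).1) n :=
      st_congr _ _ _ (fun a b hb => wtOf_old n w a b hb)
    have hle := st_le (wtOf (omEquiv n w).1) n
    have hiff : (∃ u, n < u + (st (wtOf (omEquiv n w).1) n).2 ∧ u ≤ n ∧ wtOf w u (n + 1) ≠ 0) ↔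
        ∃ i : Fin n, n < (i : ℕ) + 1 + (st (wtOf (omEquiv n w).1) n).2 ∧
          (omEquiv n w).2 i = true := by
      constructor
      · rintro ⟨u, h1, h2, h3⟩
        refine ⟨⟨u - 1, by omega⟩, by simp; omega, ?_⟩
        have := wtOf_new n w ⟨u - 1, by omega⟩
        simp only [show u - 1 + 1 = u by omega] at this
        by_contra h4
        rw [this, if_neg h4] at h3
        exact h3 rfl
      · rintro ⟨i, h1, h2⟩
        refine ⟨i + 1, h1, by omega, ?_⟩
        rw [wtOf_new, if_pos h2]
        simp
    simp only
    rw [prob_split, mul_assoc]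
    congr 2
    simp only [st, hst, hiff]
    split_ifs <;> rfl
  rw [Finset.sum_congr rfl (fun w _ => key w), (omEquiv n).sum_comp (fun x : Omega n × (Fin n → Bool) => prob p x.1 *
        ((∏ i, (if x.2 i then p else 1 - p)) *
        (if ∃ i : Fin n, n < (i : ℕ) + 1 + (st (wtOf x.1) n).2 ∧ x.2 i = true
          then h ((st (wtOf x.1) n).1 + 1, 1)
          else h ((st (wtOf x.1) n).1, (st (wtOf x.1) n).2 + 1)))), Fintype.sum_prod_type]
  apply Finset.sum_congr rfl
  intro w _
  simp only
  rw [← Finset.mul_sum, inner_sum_v p n _ (st_le _ n)]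

theorem TT_add (p : ℝ) (n : ℕ) (f g : ℕ × ℕ → ℝ) :
    TT p n (fun s => f s + g s) = TT p n f + TT p n g := by
  simp [TT, mul_add, Finset.sum_add_distrib]

theorem TT_smul (p : ℝ) (n : ℕ) (c : ℝ) (g : ℕ × ℕ → ℝ) :
    TT p n (fun s => c * g s) = c * TT p n g := by
  simp only [TT, Finset.mul_sum]
  exact Finset.sum_congr rfl (fun _ _ => by ring)

theorem TT_zero (p : ℝ) (f : ℕ × ℕ → ℝ) : TT p 0 f = f (0, 0) := by
  have : IsEmpty (Edge 0) := ⟨fun e => e.1.1.elim0⟩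
  simp [TT, st, prob]

/-- weights at renewal times -/
def mu (p : ℝ) (φ : ℕ → ℝ) : ℕ → ℝ
  | 0 => φ 0
  | i + 1 => TT p (i + 1) (fun s => (1 - (1 - p) ^ s.2) * φ (s.1 + 1))

theorem TT_renew (p : ℝ) (φ : ℕ → ℝ) (n : ℕ) : ∀ h : ℕ → ℝ,
    TT p (n + 1) (fun s => φ s.1 * h s.2) =
      ∑ x ∈ antidiagonal n, mu p φ x.1 * ((1 - p) ^ ((x.2 + 1).choose 2) * h (x.2 + 1)) := by
  induction n with
  | zero => intro h; rw [TT_succ, TT_zero]; simp [mu]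
  | succ n ih =>
    intro h
    rw [TT_succ, TT_add]
    have e1 : TT p (n + 1) (fun s => (1 - p) ^ s.2 * (φ s.1 * h (s.2 + 1))) =
        TT p (n + 1) (fun s => φ s.1 * (fun m => (1 - p) ^ m * h (m + 1)) s.2) := by
      congr 1; ext s; ring
    have e2 : TT p (n + 1) (fun s => (1 - (1 - p) ^ s.2) * (φ (s.1 + 1) * h 1)) =
        h 1 * mu p φ (n + 1) := by
      rw [mu, ← TT_smul]; congr 1; ext s; ring
    rw [e1, e2, ih (fun m => (1 - p) ^ m * h (m + 1)), Finset.Nat.antidiagonal_succ', Finset.sum_cons, Finset.sum_map, add_comm]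
    congr 1
    · simp; ring
    · apply Finset.sum_congr rfl
      rintro ⟨i, j⟩ _
      simp only [Function.Embedding.prodMap, Function.Embedding.coeFn_mk, Prod.map,
        Function.Embedding.refl_apply, Nat.succ_eq_add_one]
      rw [Nat.choose_succ_succ' (j + 1) 1, pow_add, Nat.choose_one_right]
      ring

def Mu (p : ℝ) (φ : ℕ → ℝ) : PowerSeries ℝ := PowerSeries.mk (mu p φ)

theorem Aps_eq (p : ℝ) : Aps p = 1 + PowerSeries.X * Bps p := by
  ext n
  cases n with
  | zero => simp [Aps]
  | succ n => simp [Aps, Bps, PowerSeries.coeff_succ_X_mul, PowerSeries.coeff_one]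

theorem Mu_renew (p : ℝ) (φ : ℕ → ℝ) :
    Mu p φ = PowerSeries.C (φ 0) + (Aps p - Bps p) * Mu p (fun k => φ (k + 1)) := by
  have hD : Aps p - Bps p = PowerSeries.X * PowerSeries.mk (fun j =>
      (1 - p) ^ ((j + 1).choose 2) * (1 - (1 - p) ^ (j + 1))) := by
    ext n
    cases n with
    | zero => simp [Aps, Bps]
    | succ n =>
      simp only [Aps, Bps, PowerSeries.coeff_succ_X_mul, map_sub, PowerSeries.coeff_mk]
      rw [Nat.choose_succ_succ' (n + 1) 1, pow_add]
      simp; ring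
  rw [hD, mul_assoc]
  ext n
  cases n with
  | zero => simp [Mu, mu]
  | succ n =>
    rw [map_add, PowerSeries.coeff_succ_X_mul, mul_comm, PowerSeries.coeff_mul]
    simp only [Mu, PowerSeries.coeff_mk, PowerSeries.coeff_C]
    rw [mu, ← TT_renew p (fun k => φ (k + 1)) n (fun m => 1 - (1 - p) ^ m)]
    simp [mul_comm]

theorem Mu_add (p : ℝ) (f g : ℕ → ℝ) : Mu p (fun k => f k + g k) = Mu p f + Mu p g := by
  ext n
  cases n with
  | zero => simp [Mu, mu]
  | succ n => simp [Mu, mu, mul_add, TT_add]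

theorem Mu_smul (p : ℝ) (c : ℝ) (g : ℕ → ℝ) :
    Mu p (fun k => c * g k) = PowerSeries.C c * Mu p g := by
  ext n
  cases n with
  | zero => simp [Mu, mu]
  | succ n =>
    simp only [Mu, mu, PowerSeries.coeff_mk, PowerSeries.coeff_C_mul, ← TT_smul]
    congr 1; ext s; ring

theorem EX2_gf (p : ℝ) : PowerSeries.mk (fun n => EX2 p n) =
    PowerSeries.X * (Mu p (fun k => (k : ℝ) ^ 2) * Bps p) := by
  ext n
  cases n with
  | zero => simp [EX2_eq, TT_zero]
  | succ n =>
    rw [PowerSeries.coeff_succ_X_mul, PowerSeries.coeff_mul]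
    have := TT_renew p (fun k => (k : ℝ) ^ 2) n (fun _ => 1)
    simp only [mul_one] at this
    simp only [PowerSeries.coeff_mk, EX2_eq, this, Mu, Bps]

/-- the generating function of the second moments,
`Σ E[X_n²] x^n = 2x/((1-x)³ B_p²) - 3x/((1-x)² B_p) + x/(1-x)`. -/
theorem stmt17 (p : ℝ) (hp : p ∈ Set.Ioo (0 : ℝ) 1) :
    PowerSeries.mk (fun n => EX2 p n) =
      2 * PowerSeries.X * ((1 - PowerSeries.X) ^ 3 * (Bps p) ^ 2)⁻¹ -
        3 * PowerSeries.X * ((1 - PowerSeries.X) ^ 2 * Bps p)⁻¹ +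
        PowerSeries.X * (1 - PowerSeries.X)⁻¹ := by
  have h0 := Mu_renew p (fun _ => 1)
  have h1 := Mu_renew p (fun k => (k : ℝ))
  have h2 := Mu_renew p (fun k => (k : ℝ) ^ 2)
  have e1 : (fun k : ℕ => ((k + 1 : ℕ) : ℝ)) = fun k : ℕ => (k : ℝ) + 1 := by ext k; push_cast; ring
  have e2 : (fun k : ℕ => ((k + 1 : ℕ) : ℝ) ^ 2) =
      fun k : ℕ => (k : ℝ) ^ 2 + (2 * (k : ℝ) + 1) := by ext k; push_cast; ring
  rw [e1, Mu_add] at h1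
  rw [e2, Mu_add, Mu_add, Mu_smul] at h2
  rw [EX2_gf]
  have hA := Aps_eq p
  have hC2 : (PowerSeries.C (2 : ℝ)) = 2 := map_ofNat _ 2
  simp only [Nat.cast_zero, map_one, map_zero, ne_eq, OfNat.ofNat_ne_zero, not_false_eq_true,
    zero_pow, zero_add, hC2] at h0 h1 h2
  have hB0 : PowerSeries.constantCoeff (Bps p) = 1 := by simp [Bps]
  rw [hA] at h0 h1 h2
  generalize Mu p (fun _ => 1) = M0 at *
  generalize Mu p (fun k => (k : ℝ)) = M1 at *
  generalize Mu p (fun k => (k : ℝ) ^ 2) = M2 at *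
  generalize Bps p = B at *
  have hx : (1 - PowerSeries.X : PowerSeries ℝ) * (1 - PowerSeries.X)⁻¹ = 1 :=
    PowerSeries.mul_inv_cancel _ (by simp)
  have hb : B * B⁻¹ = 1 := PowerSeries.mul_inv_cancel _ (by simp [hB0])
  simp only [PowerSeries.mul_inv_rev, pow_succ, pow_zero, one_mul]
  generalize (1 - PowerSeries.X : PowerSeries ℝ)⁻¹ = u at *
  generalize B⁻¹ = v at *
  generalize (PowerSeries.X : PowerSeries ℝ) = x at *
  have g0 : M0 = u * v := by
    linear_combination (u * v) * h0 - M0 * (B * v) * hx - M0 * hb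
  have g1 : M1 = u * v * (1 + x * B - B) * M0 := by
    linear_combination (u * v) * h1 - M1 * (B * v) * hx - M1 * hb
  have g2 : M2 = u * v * (1 + x * B - B) * (2 * M1 + M0) := by
    linear_combination (u * v) * h2 - M2 * (B * v) * hx - M2 * hb
  have hs : u * v * (1 + x * B - B) = u * v - 1 := by
    linear_combination (-(B * v)) * hx - hb
  rw [g2, hs, g1, hs, g0]
  linear_combination (x * (u * v - 1) * (2 * (u * v - 1) + 1) * u) * hb + 0 * hx

end
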